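/- arXiv:1408.2265 — 6 statements merged into one kernel-verified Lean document; each statement's English description precedes it below -/
import Mathlib

section
/- Let n ≥ 1 and k ≥ 1, and let i₁,…,i_{2k} be indices in {1,…,n}. Then ⟨ξ_{i₁}⋯ξ_{i_{2k}}⟩ = ((2k)!/((2n)^{k} k!)) · (1/(2k)!) Σ_{σ ∈ S_{2k}} ∏_{m=1}^{k} δ_{i_{σ(2m-1)} i_{σ(2m)}}, where δ is the Kronecker delta and the sum is over all permutations of {1,…,2k}. Moreover ⟨ξ_{i₁}⋯ξ_{i_{2k+1}}⟩ = 0 for any odd number of factors. -/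
open MeasureTheory

/-- The Gaussian average `⟨f⟩ = (n/(2π))^{n/2} ∫_{ℝⁿ} exp(-(n/2)|ξ|²) f(ξ) dξ`. -/
noncomputable def gaussAvg (n : ℕ) (f : (Fin n → ℝ) → ℝ) : ℝ :=
  ((n : ℝ) / (2 * Real.pi)) ^ ((n : ℝ) / 2)
    * ∫ ξ : Fin n → ℝ, Real.exp (-((n : ℝ) / 2) * ∑ j, ξ j ^ 2) * f ξ

/-- fiber cardinality -/
def cnt {α β : Type*} [Fintype α] [DecidableEq β] (f : α → β) (b : β) : ℕ :=
  (Finset.univ.filter (fun a => f a = b)).card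

/-- one-dimensional moments -/
noncomputable def mom (a : ℝ) (c : ℕ) : ℝ :=
  (a / (2 * Real.pi)) ^ ((1 : ℝ) / 2) * ∫ x : ℝ, Real.exp (-(a / 2) * x ^ 2) * x ^ c

lemma mom_odd (a : ℝ) (c : ℕ) (hc : Odd c) : mom a c = 0 := by
  unfold mom
  have h := integral_neg_eq_self (fun x : ℝ => Real.exp (-(a / 2) * x ^ 2) * x ^ c) volume
  simp only [hc.neg_pow, neg_sq, mul_neg, integral_neg] at h
  have : ∫ x : ℝ, Real.exp (-(a / 2) * x ^ 2) * x ^ c = 0 := by linarith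
  rw [this, mul_zero]

lemma mom_even_aux (a : ℝ) (ha : 0 < a) (d : ℕ) :
    ∫ x : ℝ, Real.exp (-(a / 2) * x ^ 2) * x ^ (2 * d)
      = (a / 2) ^ (-((d : ℝ) + 1 / 2)) * Real.Gamma ((d : ℝ) + 1 / 2) := by
  have h1 := integral_comp_abs (f := fun x : ℝ => Real.exp (-(a / 2) * x ^ 2) * x ^ (2 * d))
  have h2 := integral_rpow_mul_exp_neg_mul_rpow (p := 2) (q := ((2 * d : ℕ) : ℝ)) (b := a / 2)
    (by norm_num) (by have : (0:ℝ) ≤ ((2 * d : ℕ) : ℝ) := by positivity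
                      linarith) (by positivity)
  simp only [sq_abs, pow_mul] at h1
  simp only [pow_mul]
  rw [h1]
  have h3 : ∫ x in Set.Ioi (0 : ℝ), Real.exp (-(a / 2) * x ^ 2) * (x ^ 2) ^ d
      = ∫ x in Set.Ioi (0 : ℝ), x ^ ((2 * d : ℕ) : ℝ) * Real.exp (-(a / 2) * x ^ (2 : ℝ)) := by
    congr 1
    ext x
    rw [Real.rpow_natCast, Real.rpow_two, pow_mul, mul_comm]
  rw [h3, h2]
  have e1 : -(((2 * d : ℕ) : ℝ) + 1) / 2 = -((d : ℝ) + 1 / 2) := by push_cast; ring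
  have e2 : (((2 * d : ℕ) : ℝ) + 1) / 2 = ((d : ℝ) + 1 / 2) := by push_cast; ring
  rw [e1, e2]
  ring

lemma mom_even (a : ℝ) (ha : 0 < a) (d : ℕ) :
    mom a (2 * d) = (Nat.factorial (2 * d) : ℝ) / ((2 * a) ^ d * (Nat.factorial d : ℝ)) := by
  unfold mom
  rw [mom_even_aux a ha]
  induction d with
  | zero =>
    have e : a / (2 * Real.pi) = (a / 2) / Real.pi := by field_simp
    rw [e, Real.div_rpow (by positivity) Real.pi_pos.le]
    simp only [Nat.cast_zero, zero_add, Real.Gamma_one_half_eq, Real.sqrt_eq_rpow]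
    rw [Real.rpow_neg (by positivity)]
    have h1 : (a / 2) ^ ((1:ℝ) / 2) ≠ 0 := by positivity
    have h2 : Real.pi ^ ((1:ℝ) / 2) ≠ 0 := by positivity
    field_simp
    try simp
  | succ d ih =>
    have e : ((d + 1 : ℕ) : ℝ) + 1 / 2 = ((d : ℝ) + 1 / 2) + 1 := by push_cast; ring
    have e2 : -(((d : ℝ) + 1 / 2) + 1) = -((d : ℝ) + 1 / 2) + (-1) := by ring
    rw [e, Real.Gamma_add_one (by positivity), e2, Real.rpow_add (by positivity), Real.rpow_neg_one]
    have e3 : 2 * (d + 1) = 2 * d + 1 + 1 := by ring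
    rw [e3, Nat.factorial_succ, Nat.factorial_succ, Nat.factorial_succ]
    trans ((a / 2)⁻¹ * ((d : ℝ) + 1 / 2)) * ((a / (2 * Real.pi)) ^ ((1 : ℝ) / 2) * ((a / 2) ^ (-((d : ℝ) + 1 / 2)) * Real.Gamma ((d : ℝ) + 1 / 2)))
    · ring
    rw [ih]
    push_cast
    have : (Nat.factorial d : ℝ) ≠ 0 := by positivity
    field_simp
    ring

lemma gaussAvg_prod (n N : ℕ) (i : Fin N → Fin n) :
    gaussAvg n (fun ξ => ∏ m, ξ (i m)) = ∏ b, mom n (cnt i b) := by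
  unfold gaussAvg mom
  rw [Finset.prod_mul_distrib]
  congr 1
  · rw [Finset.prod_const, Finset.card_univ, Fintype.card_fin, ← Real.rpow_natCast, ← Real.rpow_mul (by positivity)]
    congr 1
    ring
  · rw [← integral_fintype_prod_volume_eq_prod
      (fun (b : Fin n) (x : ℝ) => Real.exp (-((n : ℝ) / 2) * x ^ 2) * x ^ cnt i b)]
    congr 1
    ext ξ
    rw [Finset.prod_mul_distrib, ← Real.exp_sum, Finset.mul_sum]
    congr 1
    beta_reduce
    rw [← Finset.prod_fiberwise Finset.univ i]
    refine Finset.prod_congr rfl fun b _ => ?_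
    unfold cnt
    rw [← Finset.prod_const]
    refine Finset.prod_congr rfl fun m hm => ?_
    rw [(Finset.mem_filter.1 hm).2]

lemma sum_cnt {N n : ℕ} (i : Fin N → Fin n) : ∑ b, cnt i b = N := by
  have := Finset.card_eq_sum_card_fiberwise (f := i) (s := Finset.univ) (t := Finset.univ) (by simp)
  simp only [Finset.card_univ, Fintype.card_fin] at this
  exact this.symm

lemma cnt_comp {α β : Type*} [Fintype α] [DecidableEq β] (f : α → β) (σ : Equiv.Perm α) (b : β) :
    cnt (f ∘ σ) b = cnt f b := by
  unfold cnt
  exact Finset.card_equiv σ (by simp)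

lemma exists_perm {α β : Type*} [Fintype α] [DecidableEq β] (f g : α → β)
    (h : ∀ b, cnt f b = cnt g b) : ∃ σ : Equiv.Perm α, f ∘ σ = g := by
  have e : ∀ b, Nonempty ({a // g a = b} ≃ {a // f a = b}) := fun b => by
    refine ⟨Fintype.equivOfCardEq ?_⟩
    rw [Fintype.card_subtype, Fintype.card_subtype]
    exact (h b).symm
  replace e := fun b => Classical.choice (e b)
  refine ⟨(Equiv.sigmaFiberEquiv g).symm.trans ((Equiv.sigmaCongrRight e).trans (Equiv.sigmaFiberEquiv f)), ?_⟩
  ext a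
  exact (e (g a) ⟨a, rfl⟩).2

lemma card_perm {α β : Type*} [Fintype α] [DecidableEq α] [Fintype β] [DecidableEq β] (f g : α → β) :
    (Finset.univ.filter (fun σ : Equiv.Perm α => f ∘ σ = g)).card
      = if (∀ b, cnt f b = cnt g b) then ∏ b, (cnt f b).factorial else 0 := by
  split_ifs with h
  · obtain ⟨τ, hτ⟩ := exists_perm f g h
    have := DomMulAct.stabilizer_card f
    rw [Fintype.card_subtype] at this
    simp only [Fintype.card_subtype] at this
    unfold cnt
    rw [← this]
    refine Finset.card_equiv (Equiv.mulRight τ⁻¹) fun σ => ?_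
    simp only [Finset.mem_filter, Finset.mem_univ, true_and, Equiv.coe_mulRight, Equiv.Perm.coe_mul,
      ← hτ]
    constructor
    · intro hh
      rw [← Function.comp_assoc, hh]; ext; simp
    · intro hh
      conv_rhs => rw [← hh]
      ext; simp
  · rw [Finset.card_eq_zero, Finset.filter_eq_empty_iff]
    rintro σ - rfl
    exact h fun b => (cnt_comp f σ b).symm

/-- halving map -/
def half (k : ℕ) (m : Fin (2 * k)) : Fin k := ⟨m.val / 2, by have := m.isLt; omega⟩

lemma cnt_half {k n : ℕ} (g : Fin k → Fin n) (b : Fin n) : cnt (g ∘ half k) b = 2 * cnt g b := by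
  unfold cnt
  rw [Finset.card_eq_sum_card_fiberwise (f := half k) (t := Finset.univ.filter (fun m => g m = b))
    (by intro x; simp), Finset.sum_const_nat (m := 2), mul_comm]
  intro m hm
  have hm' := (Finset.mem_filter.1 hm).2
  have hlt := m.isLt
  trans ({⟨2 * m.val, by omega⟩, ⟨2 * m.val + 1, by omega⟩} : Finset (Fin (2 * k))).card
  · congr 1
    ext x
    simp only [Finset.mem_filter, Finset.mem_univ, true_and, Finset.mem_insert, Finset.mem_singleton,
      Function.comp]
    constructor
    · rintro ⟨-, h⟩
      have : x.val / 2 = m.val := congrArg Fin.val h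
      simp only [Fin.ext_iff]; omega
    · intro h
      have : half k x = m := by
        simp only [Fin.ext_iff] at h
        simp only [half, Fin.ext_iff]; omega
      exact ⟨by rw [this, hm'], this⟩
  · rw [Finset.card_pair]; simp [Fin.ext_iff]

lemma delta_prod {k n : ℕ} (f : Fin (2 * k) → Fin n) :
    (∏ m : Fin k, (if f ⟨2 * m.val, by have := m.isLt; omega⟩
                      = f ⟨2 * m.val + 1, by have := m.isLt; omega⟩
                   then (1 : ℝ) else 0))
      = ∑ g : Fin k → Fin n, if f = g ∘ half k then 1 else 0 := by
  have key : ∀ g : Fin k → Fin n, f = g ∘ half k ↔ ∀ m : Fin k,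
      f ⟨2 * m.val, by have := m.isLt; omega⟩ = g m ∧ f ⟨2 * m.val + 1, by have := m.isLt; omega⟩ = g m := by
    intro g
    constructor
    · rintro rfl m
      refine ⟨congrArg g ?_, congrArg g ?_⟩ <;> simp only [half, Fin.ext_iff] <;> omega
    · intro h
      ext1 x
      have hx := h (half k x)
      have hlt := x.isLt
      rcases Nat.mod_two_eq_zero_or_one x.val with h0 | h0
      · rw [Function.comp, ← hx.1]; congr 1; simp only [half, Fin.ext_iff]; omega
      · rw [Function.comp, ← hx.2]; congr 1; simp only [half, Fin.ext_iff]; omega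
  simp only [key]
  rw [Fintype.prod_boole]
  split_ifs with h
  · rw [Finset.sum_eq_single (fun m : Fin k => f ⟨2 * m.val, by have := m.isLt; omega⟩)]
    · rw [if_pos]; exact fun m => ⟨rfl, (h m).symm⟩
    · intro g _ hg
      rw [if_neg]
      exact fun hh => hg (funext fun m => ((hh m).1).symm)
    · simp
  · symm
    apply Finset.sum_eq_zero
    intro g _
    rw [if_neg]
    exact fun hh => h fun m => (hh m).1.trans (hh m).2.symm

lemma exists_cnt {k n : ℕ} (d : Fin n → ℕ) (h : ∑ b, d b = k) : ∃ g : Fin k → Fin n, ∀ b, cnt g b = d b := by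
  have e : Fin k ≃ (Σ b : Fin n, Fin (d b)) := (Fintype.equivFinOfCardEq (by simp [h])).symm
  refine ⟨fun m => (e m).1, fun b => ?_⟩
  unfold cnt
  rw [← Fintype.card_subtype]
  rw [Fintype.card_congr ((e.subtypeEquiv (q := fun x => x.1 = b) (fun _ => Iff.rfl)).trans (Equiv.sigmaSubtype b)), Fintype.card_fin]

lemma card_g {k n : ℕ} (d : Fin n → ℕ) (h : ∑ b, d b = k) :
    (Finset.univ.filter (fun g : Fin k → Fin n => ∀ b, d b = cnt g b)).card * ∏ b, (d b).factorial
      = k.factorial := by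
  obtain ⟨g0, h0⟩ := exists_cnt d h
  have h1 : (Finset.univ : Finset (Equiv.Perm (Fin k))).card = k.factorial := by
    rw [Finset.card_univ, Fintype.card_perm, Fintype.card_fin]
  rw [← h1, Finset.card_eq_sum_card_fiberwise (f := fun σ : Equiv.Perm (Fin k) => g0 ∘ σ) (t := Finset.univ) (by simp)]
  simp only [card_perm, h0]
  rw [← Finset.sum_filter, Finset.sum_const, smul_eq_mul]

lemma sum_perm {k n : ℕ} (i : Fin (2 * k) → Fin n) :
    (∑ σ : Equiv.Perm (Fin (2 * k)), ∏ m : Fin k,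
                  (if i (σ ⟨2 * m.val, by have := m.isLt; omega⟩)
                      = i (σ ⟨2 * m.val + 1, by have := m.isLt; omega⟩)
                   then (1 : ℝ) else 0))
     = ((Finset.univ.filter (fun g : Fin k → Fin n => ∀ b, cnt i b = 2 * cnt g b)).card : ℝ) *
        ∏ b, ((cnt i b).factorial : ℝ) := by
  have h : ∀ σ : Equiv.Perm (Fin (2 * k)), _ := fun σ => delta_prod (i ∘ σ)
  simp only [Function.comp_apply] at h
  rw [Finset.sum_congr rfl fun σ _ => h σ, Finset.sum_comm]
  have h2 : ∀ g : Fin k → Fin n, (∑ σ : Equiv.Perm (Fin (2 * k)), if i ∘ σ = g ∘ half k then (1 : ℝ) else 0)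
    = if (∀ b, cnt i b = 2 * cnt g b) then ∏ b, ((cnt i b).factorial : ℝ) else 0 := by
    intro g
    rw [Finset.sum_boole, card_perm]
    simp only [cnt_half]
    split_ifs <;> simp
  rw [Finset.sum_congr rfl fun g _ => h2 g, ← Finset.sum_filter, Finset.sum_const, nsmul_eq_mul]

/-- **Gaussian averages of monomials.**
`⟨ξ_{i₁}⋯ξ_{i_{2k}}⟩ = ((2k)!/((2n)^k k!)) δ^{(i₁i₂}⋯δ^{i_{2k-1}i_{2k})}`, with the
complete symmetrization realized as a sum over all permutations of `{1,…,2k}`,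
and every odd moment `⟨ξ_{i₁}⋯ξ_{i_{2k+1}}⟩` vanishes. -/
theorem gaussAvg_monomials
    (n : ℕ) (hn : 1 ≤ n) (k : ℕ) (hk : 1 ≤ k) (i : Fin (2 * k) → Fin n) :
    gaussAvg n (fun ξ => ∏ m : Fin (2 * k), ξ (i m))
      = ((Nat.factorial (2 * k) : ℝ) / ((2 * (n : ℝ)) ^ k * (Nat.factorial k : ℝ)))
          * ((1 / (Nat.factorial (2 * k) : ℝ))
              * ∑ σ : Equiv.Perm (Fin (2 * k)), ∏ m : Fin k,
                  (if i (σ ⟨2 * m.val, by have := m.isLt; omega⟩)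
                      = i (σ ⟨2 * m.val + 1, by have := m.isLt; omega⟩)
                   then (1 : ℝ) else 0))
    ∧ ∀ (l : ℕ) (j : Fin (2 * l + 1) → Fin n),
        gaussAvg n (fun ξ => ∏ m : Fin (2 * l + 1), ξ (j m)) = 0 := by
  have hn0 : (0 : ℝ) < n := by exact_mod_cast hn
  constructor
  · rw [gaussAvg_prod, sum_perm]
    by_cases hE : ∀ b, Even (cnt i b)
    · have hd : ∀ b, ∃ d, cnt i b = 2 * d := fun b => (even_iff_exists_two_mul).1 (hE b)
      choose d hd using hd
      have hs : ∑ b, d b = k := by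
        have := sum_cnt i
        simp only [hd, ← Finset.mul_sum] at this
        omega
      have hc := card_g d hs
      have hc' : ((Finset.univ.filter (fun g : Fin k → Fin n => ∀ b, d b = cnt g b)).card : ℝ)
          * ∏ b, ((d b).factorial : ℝ) = k.factorial := by exact_mod_cast hc
      simp only [hd, mom_even _ hn0, Nat.mul_left_cancel_iff (show 0 < 2 by norm_num)]
      rw [← hc', Finset.prod_div_distrib, Finset.prod_mul_distrib, Finset.prod_pow_eq_pow_sum, hs]
      have p1 : ((Nat.factorial (2 * k)) : ℝ) ≠ 0 := by positivity
      have p2 : ∏ b, ((d b).factorial : ℝ) ≠ 0 := by positivity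
      have p3 : ((Finset.univ.filter (fun g : Fin k → Fin n => ∀ b, d b = cnt g b)).card : ℝ) ≠ 0 := by
        intro h0
        rw [h0, zero_mul] at hc'
        have : (Nat.factorial k : ℝ) ≠ 0 := by positivity
        exact this hc'.symm
      field_simp
    · push Not at hE
      obtain ⟨b, hb⟩ := hE
      rw [Nat.not_even_iff_odd] at hb
      rw [Finset.prod_eq_zero (Finset.mem_univ b) (mom_odd _ _ hb)]
      rw [Finset.filter_eq_empty_iff.2]
      · simp
      · intro g _ hg
        rw [hg b] at hb
        exact (Nat.not_odd_iff_even.2 (even_two_mul _)) hb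
  · intro l j
    rw [gaussAvg_prod]
    have : ∃ b, Odd (cnt j b) := by
      by_contra! h
      simp only [Nat.not_odd_iff_even] at h
      have h1 : Even (∑ b, cnt j b) := Finset.even_sum _ fun b _ => h b
      rw [sum_cnt] at h1
      exact (Nat.not_odd_iff_even.2 h1) (odd_two_mul_add_one l)
    obtain ⟨b, hb⟩ := this
    exact Finset.prod_eq_zero (Finset.mem_univ b) (mom_odd _ _ hb)
end

section
/- Let n ≥ 1 and let U : ℝⁿ × ℝⁿ → ℝ be a smooth (C^∞) function. Define the n×n matrix P(x,y) by P_{μν}(x,y) = ∂²U/∂x_μ∂y_ν(x,y), and define G^{νμ}(x,y) = (1/(n-1)!) Σ_{σ,τ} sign(σ) sign(τ) (∏_{k=2}^{n} P_{σ(k)τ(k)}(x,y)) · U(x,y), where the sum runs over all pairs of permutations σ, τ of {1,…,n} with σ(1) = μ and τ(1) = ν. Then for all (x,y): det(P(x,y)) = (1/n) Σ_{μ,ν=1}^{n} ∂²/∂x_μ∂y_ν G^{νμ}(x,y). -/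
open Matrix

/-- Partial derivative of a two-point function with respect to the `μ`-th
coordinate of its first argument. -/
noncomputable def pderivX (n : ℕ) (f : (Fin n → ℝ) × (Fin n → ℝ) → ℝ) (μ : Fin n) :
    (Fin n → ℝ) × (Fin n → ℝ) → ℝ :=
  fun p => fderiv ℝ f p (Pi.single μ 1, 0)

/-- Partial derivative of a two-point function with respect to the `ν`-th
coordinate of its second argument. -/
noncomputable def pderivY (n : ℕ) (f : (Fin n → ℝ) × (Fin n → ℝ) → ℝ) (ν : Fin n) :
    (Fin n → ℝ) × (Fin n → ℝ) → ℝ :=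
  fun p => fderiv ℝ f p (0, Pi.single ν 1)

section Helpers

variable {E : Type*} [NormedAddCommGroup E] [NormedSpace ℝ E]

/-- Directional derivative. -/
noncomputable def dirD (v : E) (f : E → ℝ) : E → ℝ := fun p => fderiv ℝ f p v

lemma dirD_smooth {f : E → ℝ} (hf : ContDiff ℝ (⊤ : ℕ∞) f) (v : E) :
    ContDiff ℝ (⊤ : ℕ∞) (dirD v f) := by
  have h := hf.fderiv_right (m := ((⊤ : ℕ∞) : WithTop ℕ∞)) (by simp)
  exact h.clm_apply contDiff_const

lemma smooth_diff {f : E → ℝ} (hf : ContDiff ℝ (⊤ : ℕ∞) f) : Differentiable ℝ f :=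
  hf.differentiable (by simp)

lemma dirD_comm {f : E → ℝ} (hf : ContDiff ℝ (⊤ : ℕ∞) f) (v w : E) :
    dirD v (dirD w f) = dirD w (dirD v f) := by
  funext p
  have h : ContDiff ℝ (⊤ : ℕ∞) (fderiv ℝ f) := hf.fderiv_right (by simp)
  have hd : DifferentiableAt ℝ (fderiv ℝ f) p := (h.differentiable (by simp)) p
  have key : ∀ a b : E, dirD a (dirD b f) p = fderiv ℝ (fderiv ℝ f) p a b := by
    intro a b
    unfold dirD
    rw [fderiv_clm_apply hd (differentiableAt_const b)]
    simp
  rw [key, key]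
  have hs : IsSymmSndFDerivAt ℝ f p := by
    apply ContDiffAt.isSymmSndFDerivAt (n := ((⊤ : ℕ∞) : WithTop ℕ∞)) hf.contDiffAt
    simp [minSmoothness_of_isRCLikeNormedField]
    exact WithTop.coe_le_coe.2 (le_top : (2 : ℕ∞) ≤ ⊤)
  exact hs v w

lemma dirD_sum {ι : Type*} (s : Finset ι) (f : ι → E → ℝ)
    (hf : ∀ i, ContDiff ℝ (⊤ : ℕ∞) (f i)) (v : E) :
    dirD v (fun q => ∑ i ∈ s, f i q) = fun q => ∑ i ∈ s, dirD v (f i) q := by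
  funext p
  unfold dirD
  rw [fderiv_fun_sum (fun i _ => smooth_diff (hf i) p)]
  simp

lemma dirD_const_mul (c : ℝ) (f : E → ℝ) (hf : ContDiff ℝ (⊤ : ℕ∞) f) (v : E) :
    dirD v (fun q => c * f q) = fun q => c * dirD v f q := by
  funext p
  unfold dirD
  rw [fderiv_const_mul (smooth_diff hf p)]
  simp

lemma dirD_ite (P : Prop) [Decidable P] (f : E → ℝ) (v : E) :
    dirD v (fun q => if P then f q else 0) = fun q => if P then dirD v f q else 0 := by
  by_cases h : P
  · simp [h]
  · simp only [h, if_false]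
    funext p
    simp [dirD]

lemma antisymm_kill {n : ℕ} (z : Fin n) (e : Fin n → E) (F : Fin n → Fin n → E → ℝ)
    (hF : ∀ k j, ContDiff ℝ (⊤ : ℕ∞) (F k j))
    (hsymm : ∀ k i j, dirD (e i) (F k j) = dirD (e j) (F k i))
    (V : E → ℝ) (hV : ContDiff ℝ (⊤ : ℕ∞) V) (p : E) :
    ∑ σ : Equiv.Perm (Fin n), ((Equiv.Perm.sign σ : ℤ) : ℝ) *
        dirD (e (σ z)) (fun q => (∏ k ∈ Finset.univ.erase z, F k (σ k) q) * V q) p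
      = ∑ σ : Equiv.Perm (Fin n), ((Equiv.Perm.sign σ : ℤ) : ℝ) *
        ((∏ k ∈ Finset.univ.erase z, F k (σ k) p) * dirD (e (σ z)) V p) := by
  have expand : ∀ σ : Equiv.Perm (Fin n),
      dirD (e (σ z)) (fun q => (∏ k ∈ Finset.univ.erase z, F k (σ k) q) * V q) p
      = (∏ k ∈ Finset.univ.erase z, F k (σ k) p) * dirD (e (σ z)) V p
        + ∑ k ∈ Finset.univ.erase z, V p *
          ((∏ j ∈ (Finset.univ.erase z).erase k, F j (σ j) p) * dirD (e (σ z)) (F k (σ k)) p) := by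
    intro σ
    have h1 : HasFDerivAt (fun q => ∏ k ∈ Finset.univ.erase z, F k (σ k) q) _ p :=
      HasFDerivAt.finsetProd
        (fun k _ => (smooth_diff (hF k (σ k)) p).hasFDerivAt)
    have h2 := h1.mul (smooth_diff hV p).hasFDerivAt
    have h3 : fderiv ℝ (fun q => (∏ k ∈ Finset.univ.erase z, F k (σ k) q) * V q) p = _ :=
      h2.fderiv
    unfold dirD
    rw [h3]
    simp [mul_sub, Finset.mul_sum]
  simp_rw [expand, mul_add, Finset.sum_add_distrib]
  rw [add_eq_left]
  simp_rw [Finset.mul_sum]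
  rw [Finset.sum_comm]
  apply Finset.sum_eq_zero
  intro k hk
  have hkz : k ≠ z := Finset.ne_of_mem_erase hk
  apply Finset.sum_involution (fun σ _ => σ * Equiv.swap z k)
  · intro σ _
    have hs : ((Equiv.Perm.sign (σ * Equiv.swap z k) : ℤ) : ℝ)
        = - ((Equiv.Perm.sign σ : ℤ) : ℝ) := by
      rw [Equiv.Perm.sign_mul, Equiv.Perm.sign_swap hkz.symm]; simp
    have hp : ∏ j ∈ (Finset.univ.erase z).erase k, F j ((σ * Equiv.swap z k) j) p
        = ∏ j ∈ (Finset.univ.erase z).erase k, F j (σ j) p := by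
      apply Finset.prod_congr rfl
      intro j hj
      simp only [Finset.mem_erase] at hj
      rw [Equiv.Perm.mul_apply, Equiv.swap_apply_of_ne_of_ne hj.2.1 hj.1]
    rw [hs, hp]
    simp only [Equiv.Perm.mul_apply, Equiv.swap_apply_left, Equiv.swap_apply_right]
    rw [hsymm k (σ k) (σ z)]
    ring
  · intro σ _ _ h
    have := mul_eq_left.mp h
    exact hkz (Equiv.swap_eq_one_iff.mp this).symm
  · intro σ _; exact Finset.mem_univ _
  · intro σ _; simp [mul_assoc]

lemma sum_sum_det {n : ℕ} (M : Fin n → Fin n → ℝ) :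
    ∑ σ : Equiv.Perm (Fin n), ∑ τ : Equiv.Perm (Fin n),
      ((Equiv.Perm.sign σ : ℤ) : ℝ) * ((Equiv.Perm.sign τ : ℤ) : ℝ) * ∏ k, M (σ k) (τ k)
    = (n.factorial : ℝ) * Matrix.det (Matrix.of M) := by
  rw [Finset.sum_comm]
  have : ∀ τ : Equiv.Perm (Fin n), ∑ σ : Equiv.Perm (Fin n),
      ((Equiv.Perm.sign σ : ℤ) : ℝ) * ((Equiv.Perm.sign τ : ℤ) : ℝ) * ∏ k, M (σ k) (τ k)
      = Matrix.det (Matrix.of M) := by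
    intro τ
    have h := Matrix.det_permute' τ (Matrix.of M)
    have h2 : ((Equiv.Perm.sign τ : ℤ) : ℝ) * ((Equiv.Perm.sign τ : ℤ) : ℝ) = 1 := by
      norm_cast; simp
    rw [Matrix.det_apply'] at h
    simp only [Matrix.submatrix_apply, Matrix.of_apply, id] at h
    calc _ = ((Equiv.Perm.sign τ : ℤ) : ℝ) * ∑ σ : Equiv.Perm (Fin n),
          ((Equiv.Perm.sign σ : ℤ) : ℝ) * ∏ k, M (σ k) (τ k) := by
            rw [Finset.mul_sum]; refine Finset.sum_congr rfl fun σ _ => by ring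
      _ = _ := by rw [h, ← mul_assoc, h2, one_mul]
  rw [Finset.sum_congr rfl (fun τ _ => this τ)]
  simp [Fintype.card_perm]

end Helpers

theorem det_mixed_derivatives_eq_double_divergence
    (n : ℕ) (hn : 1 ≤ n)
    (U : (Fin n → ℝ) × (Fin n → ℝ) → ℝ) (hU : ContDiff ℝ (⊤ : ℕ∞) U)
    (p : (Fin n → ℝ) × (Fin n → ℝ)) :
    Matrix.det (Matrix.of fun μ ν : Fin n => pderivX n (pderivY n U ν) μ p)
      = (1 / (n : ℝ)) * ∑ μ : Fin n, ∑ ν : Fin n,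
          pderivX n (pderivY n
            (fun q => (1 / (Nat.factorial (n - 1) : ℝ))
              * ∑ σ : Equiv.Perm (Fin n), ∑ τ : Equiv.Perm (Fin n),
                  (if σ ⟨0, hn⟩ = μ ∧ τ ⟨0, hn⟩ = ν then
                    ((Equiv.Perm.sign σ : ℤ) : ℝ) * ((Equiv.Perm.sign τ : ℤ) : ℝ)
                      * (∏ k ∈ Finset.univ.erase (⟨0, hn⟩ : Fin n),
                          pderivX n (pderivY n U (τ k)) (σ k) q) * U q
                   else 0)) ν) μ p := by
  set z : Fin n := ⟨0, hn⟩ with hz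
  let ex : Fin n → (Fin n → ℝ) × (Fin n → ℝ) := fun μ => (Pi.single μ 1, 0)
  let ey : Fin n → (Fin n → ℝ) × (Fin n → ℝ) := fun ν => (0, Pi.single ν 1)
  have eX : ∀ f μ, pderivX n f μ = dirD (ex μ) f := fun _ _ => rfl
  have eY : ∀ f ν, pderivY n f ν = dirD (ey ν) f := fun _ _ => rfl
  simp only [eX, eY]
  have hP : ∀ i j, ContDiff ℝ (⊤ : ℕ∞) (dirD (ex i) (dirD (ey j) U)) := fun i j =>
    dirD_smooth (dirD_smooth hU _) _
  let Q : Equiv.Perm (Fin n) → Equiv.Perm (Fin n) → (Fin n → ℝ) × (Fin n → ℝ) → ℝ :=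
    fun σ τ q => ∏ k ∈ Finset.univ.erase z, dirD (ex (σ k)) (dirD (ey (τ k)) U) q
  have hQ : ∀ σ τ, ContDiff ℝ (⊤ : ℕ∞) (Q σ τ) := fun σ τ =>
    contDiff_prod (fun k _ => hP _ _)
  let T : Equiv.Perm (Fin n) → Equiv.Perm (Fin n) → (Fin n → ℝ) × (Fin n → ℝ) → ℝ :=
    fun σ τ q => Q σ τ q * U q
  have hT : ∀ σ τ, ContDiff ℝ (⊤ : ℕ∞) (T σ τ) := fun σ τ => (hQ σ τ).mul hU
  let s : Equiv.Perm (Fin n) → ℝ := fun σ => ((Equiv.Perm.sign σ : ℤ) : ℝ)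
  have hite : ∀ (c : Prop) [Decidable c] (f : (Fin n → ℝ) × (Fin n → ℝ) → ℝ),
      ContDiff ℝ (⊤ : ℕ∞) f → ContDiff ℝ (⊤ : ℕ∞) (fun q => if c then f q else 0) := by
    intro c _ f hf
    by_cases h : c
    · simpa [h] using hf
    · simpa [h] using contDiff_const
  have lin : ∀ (v : (Fin n → ℝ) × (Fin n → ℝ)) (c : ℝ) (μ ν : Fin n)
      (A : Equiv.Perm (Fin n) → Equiv.Perm (Fin n) → (Fin n → ℝ) × (Fin n → ℝ) → ℝ),
      (∀ σ τ, ContDiff ℝ (⊤ : ℕ∞) (A σ τ)) →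
      dirD v (fun q => c * ∑ σ, ∑ τ, if σ z = μ ∧ τ z = ν then s σ * s τ * A σ τ q else 0)
      = fun q => c * ∑ σ, ∑ τ, if σ z = μ ∧ τ z = ν then s σ * s τ * dirD v (A σ τ) q else 0 := by
    intro v c μ ν A hA
    have h1 : ∀ σ τ, ContDiff ℝ (⊤ : ℕ∞) (fun q => s σ * s τ * A σ τ q) := fun σ τ =>
      contDiff_const.mul (hA σ τ)
    have h2 : ∀ σ τ, ContDiff ℝ (⊤ : ℕ∞)
      (fun q => if σ z = μ ∧ τ z = ν then s σ * s τ * A σ τ q else 0) := fun σ τ =>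
      hite _ _ (h1 σ τ)
    have h3 : ∀ σ, ContDiff ℝ (⊤ : ℕ∞)
      (fun q => ∑ τ, if σ z = μ ∧ τ z = ν then s σ * s τ * A σ τ q else 0) := fun σ =>
      ContDiff.sum (fun τ _ => h2 σ τ)
    rw [dirD_const_mul _ _ (ContDiff.sum (fun σ _ => h3 σ)), dirD_sum _ _ h3]
    funext q
    congr 1
    refine Finset.sum_congr rfl fun σ _ => ?_
    rw [dirD_sum _ _ (h2 σ)]
    refine Finset.sum_congr rfl fun τ _ => ?_
    rw [dirD_ite, dirD_const_mul _ _ (hA σ τ)]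
  have hG : ∀ μ ν, dirD (ex μ) (dirD (ey ν) (fun q => (1 / (Nat.factorial (n - 1) : ℝ))
              * ∑ σ : Equiv.Perm (Fin n), ∑ τ : Equiv.Perm (Fin n),
                  (if σ z = μ ∧ τ z = ν then
                    ((Equiv.Perm.sign σ : ℤ) : ℝ) * ((Equiv.Perm.sign τ : ℤ) : ℝ)
                      * (∏ k ∈ Finset.univ.erase z,
                          dirD (ex (σ k)) (dirD (ey (τ k)) U) q) * U q
                   else 0))) p
      = (1 / (Nat.factorial (n - 1) : ℝ)) * ∑ σ, ∑ τ, if σ z = μ ∧ τ z = ν then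
          s σ * s τ * dirD (ex (σ z)) (dirD (ey (τ z)) (T σ τ)) p else 0 := by
    intro μ ν
    have h0 := lin (ey ν) (1 / (Nat.factorial (n - 1) : ℝ)) μ ν T hT
    have h1 := lin (ex μ) (1 / (Nat.factorial (n - 1) : ℝ)) μ ν
      (fun σ τ => dirD (ey ν) (T σ τ)) (fun σ τ => dirD_smooth (hT σ τ) _)
    rw [← h0] at h1
    simp only [mul_assoc] at h1 ⊢
    refine (congrFun h1 p).trans ?_
    congr 1
    refine Finset.sum_congr rfl fun σ _ => Finset.sum_congr rfl fun τ _ => ?_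
    by_cases h : σ z = μ ∧ τ z = ν
    · rw [if_pos h, if_pos h, h.1, h.2]
    · rw [if_neg h, if_neg h]
  simp only [hG]
  simp only [← Finset.mul_sum]
  have hsw : (∑ μ, ∑ ν, ∑ σ : Equiv.Perm (Fin n), ∑ τ : Equiv.Perm (Fin n),
        if σ z = μ ∧ τ z = ν then
          s σ * s τ * dirD (ex (σ z)) (dirD (ey (τ z)) (T σ τ)) p else 0)
      = ∑ σ : Equiv.Perm (Fin n), ∑ τ : Equiv.Perm (Fin n),
          s σ * s τ * dirD (ex (σ z)) (dirD (ey (τ z)) (T σ τ)) p := by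
    have e1 : ∀ μ, (∑ ν, ∑ σ : Equiv.Perm (Fin n), ∑ τ : Equiv.Perm (Fin n),
        if σ z = μ ∧ τ z = ν then
          s σ * s τ * dirD (ex (σ z)) (dirD (ey (τ z)) (T σ τ)) p else 0)
        = ∑ σ : Equiv.Perm (Fin n), ∑ τ : Equiv.Perm (Fin n), if σ z = μ then
          s σ * s τ * dirD (ex (σ z)) (dirD (ey (τ z)) (T σ τ)) p else 0 := by
      intro μ
      rw [Finset.sum_comm]
      refine Finset.sum_congr rfl fun σ _ => ?_
      rw [Finset.sum_comm]
      refine Finset.sum_congr rfl fun τ _ => ?_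
      by_cases h : σ z = μ <;> simp [h]
    rw [Finset.sum_congr rfl (fun μ _ => e1 μ), Finset.sum_comm]
    refine Finset.sum_congr rfl fun σ _ => ?_
    rw [Finset.sum_comm]
    refine Finset.sum_congr rfl fun τ _ => ?_
    simp
  rw [hsw]
  -- first step: the y-derivative
  have step1 : ∀ σ : Equiv.Perm (Fin n),
      (fun q => ∑ τ : Equiv.Perm (Fin n), s τ * dirD (ey (τ z)) (T σ τ) q)
      = fun q => ∑ τ : Equiv.Perm (Fin n), s τ * (Q σ τ q * dirD (ey (τ z)) U q) := by
    intro σ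
    funext q
    refine antisymm_kill z ey (fun k j => dirD (ex (σ k)) (dirD (ey j) U))
      (fun k j => hP _ _) ?_ U hU q
    intro k i j
    rw [dirD_comm (dirD_smooth hU _), dirD_comm hU (ey i) (ey j),
      dirD_comm (dirD_smooth hU _) (ex (σ k))]
  have step1' : ∀ σ : Equiv.Perm (Fin n),
      ∑ τ : Equiv.Perm (Fin n), s σ * s τ * dirD (ex (σ z)) (dirD (ey (τ z)) (T σ τ)) p
      = ∑ τ : Equiv.Perm (Fin n), s τ * (s σ *
          dirD (ex (σ z)) (fun q => Q σ τ q * dirD (ey (τ z)) U q) p) := by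
    intro σ
    have h := congrFun (congrArg (dirD (ex (σ z))) (step1 σ)) p
    have hA : ∀ τ, ContDiff ℝ (⊤ : ℕ∞) (dirD (ey (τ z)) (T σ τ)) := fun τ =>
      dirD_smooth (hT σ τ) _
    have hB : ∀ τ : Equiv.Perm (Fin n), ContDiff ℝ (⊤ : ℕ∞)
        (fun q => Q σ τ q * dirD (ey (τ z)) U q) := fun τ =>
      (hQ σ τ).mul (dirD_smooth hU _)
    rw [dirD_sum _ _ (fun τ => contDiff_const.mul (hA τ)),
      dirD_sum _ _ (fun τ => contDiff_const.mul (hB τ))] at h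
    simp only [fun τ => dirD_const_mul (s τ) _ (hA τ) (ex (σ z)),
      fun τ => dirD_const_mul (s τ) _ (hB τ) (ex (σ z))] at h
    calc _ = s σ * ∑ τ, s τ * dirD (ex (σ z)) (dirD (ey (τ z)) (T σ τ)) p := by
          rw [Finset.mul_sum]; exact Finset.sum_congr rfl fun τ _ => by ring
      _ = _ := by
          rw [h, Finset.mul_sum]; exact Finset.sum_congr rfl fun τ _ => by ring
  rw [Finset.sum_congr rfl (fun σ _ => step1' σ), Finset.sum_comm]
  have step2 : ∀ τ : Equiv.Perm (Fin n),
      ∑ σ : Equiv.Perm (Fin n), s τ * (s σ *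
          dirD (ex (σ z)) (fun q => Q σ τ q * dirD (ey (τ z)) U q) p)
      = ∑ σ : Equiv.Perm (Fin n), s σ * s τ *
          ∏ k, dirD (ex (σ k)) (dirD (ey (τ k)) U) p := by
    intro τ
    have h := antisymm_kill z ex (fun k i => dirD (ex i) (dirD (ey (τ k)) U))
      (fun k j => hP _ _) (fun k i j => dirD_comm (dirD_smooth hU _) _ _)
      (dirD (ey (τ z)) U) (dirD_smooth hU _) p
    rw [← Finset.mul_sum]
    refine (congrArg (fun x => s τ * x) h).trans ?_
    simp only [Finset.mul_sum]
    refine Finset.sum_congr rfl fun σ _ => ?_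
    rw [← Finset.prod_erase_mul Finset.univ _ (Finset.mem_univ z)]
    simp only [s]
    ring
  rw [Finset.sum_congr rfl (fun τ _ => step2 τ), Finset.sum_comm]
  rw [sum_sum_det (fun i j => dirD (ex i) (dirD (ey j) U) p)]
  obtain ⟨m, rfl⟩ : ∃ m, n = m + 1 := ⟨n - 1, by omega⟩
  rw [Nat.factorial_succ]
  have hm : ((m.factorial : ℕ) : ℝ) ≠ 0 := by positivity
  have hm1 : ((m : ℝ) + 1) ≠ 0 := by positivity
  simp only [Nat.add_sub_cancel]
  push_cast
  field_simp
end

section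
/- Let n ≥ 1 and let U : ℝⁿ × ℝⁿ → ℝ be a smooth (C^∞) function with compact support. Define the n×n matrix P(x,y) by P_{μν}(x,y) = ∂²U/∂x_μ∂y_ν(x,y). Then ∫_{ℝⁿ×ℝⁿ} det(P(x,y)) dx dy = 0; that is, the integral of the determinant of the matrix of mixed second partial derivatives of any compactly supported smooth two-point function vanishes. -/
open Matrix MeasureTheory

theorem aux_det {E : Type*} [NormedAddCommGroup E] [NormedSpace ℝ E] [FiniteDimensional ℝ E]
    [MeasurableSpace E] [BorelSpace E] (m : Measure E) [m.IsAddHaarMeasure]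
    (n : ℕ) (i0 : Fin n) (f : Fin n → E → ℝ) (v : Fin n → E)
    (hf : ∀ i, ContDiff ℝ (⊤ : ℕ∞) (f i)) (hs : HasCompactSupport (f i0)) :
    ∫ p, Matrix.det (Matrix.of fun μ ν : Fin n => fderiv ℝ (f ν) p (v μ)) ∂m = 0 := by
  have hd : ∀ i w, ContDiff ℝ (⊤ : ℕ∞) (fun p => fderiv ℝ (f i) p w) := fun i w =>
    ((hf i).fderiv_right (m := (⊤ : ℕ∞)) (by simp)).clm_apply contDiff_const
  set S := Finset.univ.erase i0 with hS
  let G : Equiv.Perm (Fin n) → E → ℝ := fun σ p => ∏ i ∈ S, fderiv ℝ (f i) p (v (σ i))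
  have hG : ∀ σ, ContDiff ℝ (⊤ : ℕ∞) (G σ) := fun σ => contDiff_prod fun i _ => hd i _
  have hGd : ∀ σ p w, fderiv ℝ (G σ) p w = ∑ i ∈ S, (∏ j ∈ S.erase i, fderiv ℝ (f j) p (v (σ j))) *
      fderiv ℝ (fun q => fderiv ℝ (f i) q (v (σ i))) p w := by
    intro σ p w
    have h2 := fderiv_finsetProd (𝕜 := ℝ) (u := S) (x := p)
      (g := fun i q => fderiv ℝ (f i) q (v (σ i)))
      (fun i _ => (hd i (v (σ i))).differentiable (by simp) p)
    simp only [G]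
    rw [h2]
    simp
  have hsymm : ∀ i p a b, fderiv ℝ (fun q => fderiv ℝ (f i) q a) p b =
      fderiv ℝ (fun q => fderiv ℝ (f i) q b) p a := by
    intro i p a b
    have h1 : DifferentiableAt ℝ (fderiv ℝ (f i)) p :=
      ((hf i).fderiv_right (m := (⊤ : ℕ∞)) (by simp)).differentiable (by simp) p
    have h3 : IsSymmSndFDerivAt ℝ (f i) p := (hf i).contDiffAt.isSymmSndFDerivAt (by simpa using (WithTop.coe_le_coe.2 (le_top : (2 : ℕ∞) ≤ ⊤)))
    rw [fderiv_clm_apply h1 (differentiableAt_const a), fderiv_clm_apply h1 (differentiableAt_const b)]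
    simpa using h3 b a
  have hc0 : ∀ w, HasCompactSupport (fun p => fderiv ℝ (f i0) p w) := fun w => hs.fderiv_apply ℝ w
  have I1 : ∀ σ w, Integrable (fun p => fderiv ℝ (f i0) p w * G σ p) m := fun σ w =>
    (((hd i0 w).continuous).mul (hG σ).continuous).integrable_of_hasCompactSupport (hc0 w).mul_right
  have I2 : ∀ σ w, Integrable (fun p => f i0 p * fderiv ℝ (G σ) p w) m := fun σ w =>
    (((hf i0).continuous).mul (((hG σ).fderiv_right (m := (⊤ : ℕ∞)) (by simp)).clm_apply
      contDiff_const).continuous).integrable_of_hasCompactSupport hs.mul_right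
  have I3 : ∀ σ, Integrable (fun p => f i0 p * G σ p) m := fun σ =>
    (((hf i0).continuous).mul (hG σ).continuous).integrable_of_hasCompactSupport hs.mul_right
  have hbp : ∀ σ w, ∫ p, fderiv ℝ (f i0) p w * G σ p ∂m = - ∫ p, f i0 p * fderiv ℝ (G σ) p w ∂m := by
    intro σ w
    rw [integral_mul_fderiv_eq_neg_fderiv_mul_of_integrable (I1 σ w) (I2 σ w) (I3 σ)
      (fun x _ => (hf i0).differentiable (by simp) x) (fun x _ => (hG σ).differentiable (by simp) x), neg_neg]
  have hdet : ∀ p, Matrix.det (Matrix.of fun μ ν : Fin n => fderiv ℝ (f ν) p (v μ)) =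
      ∑ σ : Equiv.Perm (Fin n), ((Equiv.Perm.sign σ : ℤ) : ℝ) *
        (fderiv ℝ (f i0) p (v (σ i0)) * G σ p) := by
    intro p
    rw [Matrix.det_apply']
    refine Finset.sum_congr rfl fun σ _ => ?_
    simp only [Matrix.of_apply, G, hS]
    rw [Finset.mul_prod_erase Finset.univ (fun i => fderiv ℝ (f i) p (v (σ i))) (Finset.mem_univ i0)]
  simp_rw [hdet]
  rw [integral_finsetSum _ fun σ _ => (I1 σ _).const_mul _]
  simp_rw [integral_const_mul, hbp, mul_neg, ← integral_const_mul]
  rw [Finset.sum_neg_distrib, ← integral_finsetSum _ fun σ _ => (I2 σ _).const_mul _, neg_eq_zero]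
  refine integral_eq_zero_of_ae (Filter.Eventually.of_forall fun p => ?_)
  simp only [Pi.zero_apply, hGd, Finset.mul_sum]
  rw [Finset.sum_comm]
  refine Finset.sum_eq_zero fun i hi => ?_
  have hne : i ≠ i0 := Finset.ne_of_mem_erase hi
  refine self_eq_neg.mp ?_
  rw [← Finset.sum_neg_distrib]
  refine Fintype.sum_equiv (Equiv.mulRight (Equiv.swap i0 i)) _ _ fun σ => ?_
  have hp : ∏ j ∈ S.erase i, fderiv ℝ (f j) p (v ((σ * Equiv.swap i0 i) j)) =
      ∏ j ∈ S.erase i, fderiv ℝ (f j) p (v (σ j)) := by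
    refine Finset.prod_congr rfl fun j hj => ?_
    have h1 : j ≠ i := Finset.ne_of_mem_erase hj
    have h2 : j ≠ i0 := Finset.ne_of_mem_erase (Finset.mem_of_mem_erase hj)
    rw [Equiv.Perm.mul_apply, Equiv.swap_apply_of_ne_of_ne h2 h1]
  simp only [Equiv.coe_mulRight, hp]
  rw [hsymm i p]
  simp [Equiv.Perm.sign_mul, Equiv.Perm.sign_swap hne.symm]

/-- **Vanishing of the integrated heat determinant.**
For a smooth compactly supported two-point function `U` on `ℝⁿ × ℝⁿ` with
`P_{μν}(x,y) = ∂²U/∂x_μ∂y_ν(x,y)`, the integral of `det P` over `ℝⁿ × ℝⁿ`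
vanishes. -/
theorem integral_det_mixed_derivatives_eq_zero
    (n : ℕ) (hn : 1 ≤ n)
    (U : (Fin n → ℝ) × (Fin n → ℝ) → ℝ)
    (hU : ContDiff ℝ (⊤ : ℕ∞) U) (hsupp : HasCompactSupport U) :
    (∫ p : (Fin n → ℝ) × (Fin n → ℝ),
        Matrix.det (Matrix.of fun μ ν : Fin n => pderivX n (pderivY n U ν) μ p)) = 0 := by
  haveI : ((volume : Measure (Fin n → ℝ)).prod (volume : Measure (Fin n → ℝ))).IsAddHaarMeasure :=
    Measure.prod.instIsAddHaarMeasure _ _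
  have h := aux_det ((volume : Measure (Fin n → ℝ)).prod (volume : Measure (Fin n → ℝ))) n ⟨0, hn⟩
    (fun ν => pderivY n U ν) (fun μ => (Pi.single μ 1, 0))
    (fun i => (hU.fderiv_right (m := (⊤ : ℕ∞)) (by simp)).clm_apply contDiff_const)
    (hsupp.fderiv_apply ℝ _)
  exact h
end

section
/- Let n ≥ 1 and let C and B be symmetric n×n real matrices. Define Sym(C⊗C⊗B)(μ₁,…,μ₆) = (1/6!) Σ_{σ ∈ S₆} C_{μ_{σ(1)}μ_{σ(2)}} C_{μ_{σ(3)}μ_{σ(4)}} B_{μ_{σ(5)}μ_{σ(6)}}. Then Σ_{i,j,k=1}^{n} Sym(C⊗C⊗B)(i,i,j,j,k,k) = (1/15)( (tr C)² tr B + 2 tr(C²) tr B + 4 tr(C) tr(CB) + 8 tr(C²B) ). -/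
open Matrix

theorem perm_sum_succ_aux {α : Type*} (m : ℕ) (x : Fin (m+1) → α) (g : (Fin (m+1) → α) → ℝ) :
    ∑ σ : Equiv.Perm (Fin (m+1)), g (fun a => x (σ a)) =
      ∑ p : Fin (m+1), ∑ τ : Equiv.Perm (Fin m),
        g (Fin.cons (x p) (fun a => (fun b : Fin m => x (Equiv.swap 0 p b.succ)) (τ a))) := by
  rw [← Fintype.sum_prod_type', ← (Equiv.Perm.decomposeFin (n := m)).symm.sum_comp]
  refine Finset.sum_congr rfl fun q _ => ?_
  obtain ⟨p, τ⟩ := q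
  congr 1
  funext a
  refine Fin.cases ?_ (fun b => ?_) a
  · simp
  · simp

theorem perm_sum_two_aux {α : Type*} (x : Fin 2 → α) (g : (Fin 2 → α) → ℝ) :
    ∑ σ : Equiv.Perm (Fin 2), g (fun a => x (σ a)) = g ![x 0, x 1] + g ![x 1, x 0] := by
  refine (perm_sum_succ_aux 1 x g).trans ((Fin.sum_univ_two _).trans ?_)
  simp only [Finset.univ_unique, Finset.sum_singleton]
  congr 2
  · funext a; fin_cases a <;> rfl
  · funext a; fin_cases a <;> rfl

theorem perm_sum_three_aux {α : Type*} (x : Fin 3 → α) (g : (Fin 3 → α) → ℝ) :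
    ∑ σ : Equiv.Perm (Fin 3), g (fun a => x (σ a)) =
      g ![x 0, x 1, x 2] + g ![x 0, x 2, x 1] + g ![x 1, x 0, x 2] + g ![x 1, x 2, x 0]
       + g ![x 2, x 1, x 0] + g ![x 2, x 0, x 1] := by
  refine (perm_sum_succ_aux 2 x g).trans ((Fin.sum_univ_three _).trans ?_)
  have h := fun p => perm_sum_two_aux (fun b : Fin 2 => x (Equiv.swap 0 p b.succ))
    (fun y => g (Fin.cons (x p) y))
  simp only [h]
  have e1 : ∀ b : Fin 2, (Equiv.swap (0 : Fin 3) 0 b.succ) = ![1, 2] b := by decide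
  have e2 : ∀ b : Fin 2, (Equiv.swap (0 : Fin 3) 1 b.succ) = ![0, 2] b := by decide
  have e3 : ∀ b : Fin 2, (Equiv.swap (0 : Fin 3) 2 b.succ) = ![1, 0] b := by decide
  simp only [e1, e2, e3]
  simp only [Matrix.cons_val]
  change g ![x 0, x 1, x 2] + g ![x 0, x 2, x 1] + (g ![x 1, x 0, x 2] + g ![x 1, x 2, x 0])
       + (g ![x 2, x 1, x 0] + g ![x 2, x 0, x 1]) = _
  ring

theorem perm_sum_four_aux {α : Type*} (x : Fin 4 → α) (C B : α → α → ℝ)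
    (hC : ∀ a b, C a b = C b a) (hB : ∀ a b, B a b = B b a) :
    ∑ σ : Equiv.Perm (Fin 4), C (x (σ 0)) (x (σ 1)) * B (x (σ 2)) (x (σ 3)) =
      4 * (C (x 0) (x 1) * B (x 2) (x 3) + C (x 0) (x 2) * B (x 1) (x 3)
        + C (x 0) (x 3) * B (x 1) (x 2) + C (x 1) (x 2) * B (x 0) (x 3)
        + C (x 1) (x 3) * B (x 0) (x 2) + C (x 2) (x 3) * B (x 0) (x 1)) := by
  have h0 := perm_sum_succ_aux 3 x (fun y => C (y 0) (y 1) * B (y 2) (y 3))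
  refine h0.trans ((Fin.sum_univ_four _).trans ?_)
  have h := fun p => perm_sum_three_aux (fun b : Fin 3 => x (Equiv.swap 0 p b.succ))
    (fun y => (fun y : Fin 4 → α => C (y 0) (y 1) * B (y 2) (y 3)) (Fin.cons (x p) y))
  simp only [h]
  have e1 : ∀ b : Fin 3, (Equiv.swap (0 : Fin 4) 0 b.succ) = ![1, 2, 3] b := by decide
  have e2 : ∀ b : Fin 3, (Equiv.swap (0 : Fin 4) 1 b.succ) = ![0, 2, 3] b := by decide
  have e3 : ∀ b : Fin 3, (Equiv.swap (0 : Fin 4) 2 b.succ) = ![1, 0, 3] b := by decide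
  have e4 : ∀ b : Fin 3, (Equiv.swap (0 : Fin 4) 3 b.succ) = ![1, 2, 0] b := by decide
  simp only [e1, e2, e3, e4]
  change C (x 0) (x 1) * B (x 2) (x 3) + C (x 0) (x 1) * B (x 3) (x 2)
    + C (x 0) (x 2) * B (x 1) (x 3) + C (x 0) (x 2) * B (x 3) (x 1)
    + C (x 0) (x 3) * B (x 2) (x 1) + C (x 0) (x 3) * B (x 1) (x 2)
    + (C (x 1) (x 0) * B (x 2) (x 3) + C (x 1) (x 0) * B (x 3) (x 2)
    + C (x 1) (x 2) * B (x 0) (x 3) + C (x 1) (x 2) * B (x 3) (x 0)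
    + C (x 1) (x 3) * B (x 2) (x 0) + C (x 1) (x 3) * B (x 0) (x 2))
    + (C (x 2) (x 1) * B (x 0) (x 3) + C (x 2) (x 1) * B (x 3) (x 0)
    + C (x 2) (x 0) * B (x 1) (x 3) + C (x 2) (x 0) * B (x 3) (x 1)
    + C (x 2) (x 3) * B (x 0) (x 1) + C (x 2) (x 3) * B (x 1) (x 0))
    + (C (x 3) (x 1) * B (x 2) (x 0) + C (x 3) (x 1) * B (x 0) (x 2)
    + C (x 3) (x 2) * B (x 1) (x 0) + C (x 3) (x 2) * B (x 0) (x 1)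
    + C (x 3) (x 0) * B (x 2) (x 1) + C (x 3) (x 0) * B (x 1) (x 2)) = _
  rw [hC (x 1) (x 0), hC (x 2) (x 0), hC (x 3) (x 0), hC (x 2) (x 1), hC (x 3) (x 1),
    hC (x 3) (x 2), hB (x 1) (x 0), hB (x 2) (x 0), hB (x 3) (x 0), hB (x 2) (x 1),
    hB (x 3) (x 1), hB (x 3) (x 2)]
  ring

theorem perm_sum_five_aux {α : Type*} (z : α) (x : Fin 5 → α) (C B : α → α → ℝ)
    (hC : ∀ a b, C a b = C b a) (hB : ∀ a b, B a b = B b a) :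
    ∑ σ : Equiv.Perm (Fin 5), C z (x (σ 0)) * C (x (σ 1)) (x (σ 2)) * B (x (σ 3)) (x (σ 4)) =
     ∑ p : Fin 5, C z (x p) *
      (fun w : Fin 4 → α => 4 * (C (w 0) (w 1) * B (w 2) (w 3) + C (w 0) (w 2) * B (w 1) (w 3)
        + C (w 0) (w 3) * B (w 1) (w 2) + C (w 1) (w 2) * B (w 0) (w 3)
        + C (w 1) (w 3) * B (w 0) (w 2) + C (w 2) (w 3) * B (w 0) (w 1)))
        (fun b : Fin 4 => x (Equiv.swap 0 p b.succ)) := by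
  have h0 := perm_sum_succ_aux 4 x (fun y => C z (y 0) * C (y 1) (y 2) * B (y 3) (y 4))
  rw [h0]
  refine Finset.sum_congr rfl fun p _ => ?_
  have h := perm_sum_four_aux (fun b : Fin 4 => x (Equiv.swap 0 p b.succ)) C B hC hB
  simp only at h ⊢
  rw [← h, Finset.mul_sum]
  refine Finset.sum_congr rfl fun τ _ => ?_
  rw [← mul_assoc]
  rfl

theorem perm_sum_six_aux {α : Type*} (x : Fin 6 → α) (C B : α → α → ℝ)
    (hC : ∀ a b, C a b = C b a) (hB : ∀ a b, B a b = B b a) :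
    ∑ σ : Equiv.Perm (Fin 6),
      C (x (σ 0)) (x (σ 1)) * C (x (σ 2)) (x (σ 3)) * B (x (σ 4)) (x (σ 5)) =
     ∑ q : Fin 6, ∑ p : Fin 5, 
      (fun (z : α) (x : Fin 5 → α) => C z (x p) *
      (fun w : Fin 4 → α => 4 * (C (w 0) (w 1) * B (w 2) (w 3) + C (w 0) (w 2) * B (w 1) (w 3)
        + C (w 0) (w 3) * B (w 1) (w 2) + C (w 1) (w 2) * B (w 0) (w 3)
        + C (w 1) (w 3) * B (w 0) (w 2) + C (w 2) (w 3) * B (w 0) (w 1)))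
        (fun b : Fin 4 => x (Equiv.swap 0 p b.succ))) (x q)
        (fun b : Fin 5 => x (Equiv.swap 0 q b.succ)) := by
  have h0 := perm_sum_succ_aux 5 x
    (fun y => C (y 0) (y 1) * C (y 2) (y 3) * B (y 4) (y 5))
  rw [h0]
  refine Finset.sum_congr rfl fun p _ => ?_
  exact perm_sum_five_aux (x p) (fun b : Fin 5 => x (Equiv.swap 0 p b.succ)) C B hC hB

theorem perm_sum_pairs_aux {α : Type*} (i j k : α) (C B : α → α → ℝ)
    (hC : ∀ a b, C a b = C b a) (hB : ∀ a b, B a b = B b a) :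
    ∑ σ : Equiv.Perm (Fin 6),
      C (![i, i, j, j, k, k] (σ 0)) (![i, i, j, j, k, k] (σ 1))
            * C (![i, i, j, j, k, k] (σ 2)) (![i, i, j, j, k, k] (σ 3))
            * B (![i, i, j, j, k, k] (σ 4)) (![i, i, j, j, k, k] (σ 5)) =
    16 * (C i i * C j j * B k k + C i i * C k k * B j j + C j j * C k k * B i i
      + 2 * (C i j * C i j * B k k + C i k * C i k * B j j + C j k * C j k * B i i)
      + 4 * (C i i * C j k * B j k + C j j * C i k * B i k + C k k * C i j * B i j)
      + 8 * (C i j * C j k * B i k + C i j * C i k * B j k + C i k * C j k * B i j)) := by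
  rw [perm_sum_six_aux _ C B hC hB]
  have e1 : ∀ b : Fin 5, (Equiv.swap (0 : Fin 6) 0 b.succ) = ![1, 2, 3, 4, 5] b := by decide
  have e2 : ∀ b : Fin 5, (Equiv.swap (0 : Fin 6) 1 b.succ) = ![0, 2, 3, 4, 5] b := by decide
  have e3 : ∀ b : Fin 5, (Equiv.swap (0 : Fin 6) 2 b.succ) = ![1, 0, 3, 4, 5] b := by decide
  have e4 : ∀ b : Fin 5, (Equiv.swap (0 : Fin 6) 3 b.succ) = ![1, 2, 0, 4, 5] b := by decide
  have e5 : ∀ b : Fin 5, (Equiv.swap (0 : Fin 6) 4 b.succ) = ![1, 2, 3, 0, 5] b := by decide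
  have e6 : ∀ b : Fin 5, (Equiv.swap (0 : Fin 6) 5 b.succ) = ![1, 2, 3, 4, 0] b := by decide
  have f1 : ∀ b : Fin 4, (Equiv.swap (0 : Fin 5) 0 b.succ) = ![1, 2, 3, 4] b := by decide
  have f2 : ∀ b : Fin 4, (Equiv.swap (0 : Fin 5) 1 b.succ) = ![0, 2, 3, 4] b := by decide
  have f3 : ∀ b : Fin 4, (Equiv.swap (0 : Fin 5) 2 b.succ) = ![1, 0, 3, 4] b := by decide
  have f4 : ∀ b : Fin 4, (Equiv.swap (0 : Fin 5) 3 b.succ) = ![1, 2, 0, 4] b := by decide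
  have f5 : ∀ b : Fin 4, (Equiv.swap (0 : Fin 5) 4 b.succ) = ![1, 2, 3, 0] b := by decide
  simp only [Fin.sum_univ_six, Fin.sum_univ_five, e1, e2, e3, e4, e5, e6, f1, f2, f3, f4, f5]
  simp only [Matrix.cons_val]
  rw [hC j i, hC k i, hC k j, hB j i, hB k i]
  try rw [hB k j]
  ring

/-- **Contraction of the symmetrized product `C⊗C⊗B` of symmetric matrices.** With
`Sym(C⊗C⊗B)(μ₁,…,μ₆) = (1/6!) Σ_{σ ∈ S₆} C_{μ_{σ(1)}μ_{σ(2)}} C_{μ_{σ(3)}μ_{σ(4)}} B_{μ_{σ(5)}μ_{σ(6)}}`,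
one has `Σ_{i,j,k} Sym(C⊗C⊗B)(i,i,j,j,k,k)
  = (1/15)((tr C)² tr B + 2 tr(C²) tr B + 4 tr(C) tr(CB) + 8 tr(C²B))`. -/
theorem contraction_sym_CCB
    (n : ℕ) (hn : 1 ≤ n)
    (C B : Matrix (Fin n) (Fin n) ℝ) (hC : C.IsSymm) (hB : B.IsSymm) :
    (∑ i : Fin n, ∑ j : Fin n, ∑ k : Fin n,
        (1 / (Nat.factorial 6 : ℝ)) * ∑ σ : Equiv.Perm (Fin 6),
          C (![i, i, j, j, k, k] (σ 0)) (![i, i, j, j, k, k] (σ 1))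
            * C (![i, i, j, j, k, k] (σ 2)) (![i, i, j, j, k, k] (σ 3))
            * B (![i, i, j, j, k, k] (σ 4)) (![i, i, j, j, k, k] (σ 5)))
      = (1 / 15) * (C.trace ^ 2 * B.trace + 2 * (C * C).trace * B.trace
          + 4 * C.trace * (C * B).trace + 8 * (C * C * B).trace) := by
  have hC' : ∀ a b, C a b = C b a := fun a b => (hC.apply a b).symm
  have hB' : ∀ a b, B a b = B b a := fun a b => (hB.apply a b).symm
  simp only [perm_sum_pairs_aux _ _ _ C B hC' hB']
  have S1 : ∀ f : Fin n → Fin n → Fin n → ℝ,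
      ∑ i, ∑ j, ∑ k, f i j k = ∑ i, ∑ j, ∑ k, f j i k := fun f => Finset.sum_comm
  have S2 : ∀ f : Fin n → Fin n → Fin n → ℝ,
      ∑ i, ∑ j, ∑ k, f i j k = ∑ i, ∑ j, ∑ k, f i k j := fun f =>
    Finset.sum_congr rfl fun i _ => Finset.sum_comm
  have a1 : ∑ i, ∑ j, ∑ k, C i i * C j j * B k k = C.trace ^ 2 * B.trace := by
    simp only [Matrix.trace, Matrix.diag_apply, pow_two, Finset.sum_mul,
      Finset.mul_sum]
    rw [S1, S2, S1]
  have a2 : ∑ i, ∑ j, ∑ k, C i i * C k k * B j j = C.trace ^ 2 * B.trace := by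
    rw [← a1, S2]
  have a3 : ∑ i, ∑ j, ∑ k, C j j * C k k * B i i = C.trace ^ 2 * B.trace := by
    rw [← a2, S1]
  have b1 : ∑ i, ∑ j, ∑ k, C i j * C i j * B k k = (C * C).trace * B.trace := by
    simp only [Matrix.trace, Matrix.diag_apply, Matrix.mul_apply, Finset.sum_mul]
    simp only [Finset.mul_sum]
    refine Finset.sum_congr rfl fun i _ => Finset.sum_congr rfl fun j _ =>
      Finset.sum_congr rfl fun k _ => ?_
    rw [hC' j i]
  have b2 : ∑ i, ∑ j, ∑ k, C i k * C i k * B j j = (C * C).trace * B.trace := by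
    rw [← b1, S2]
  have b3 : ∑ i, ∑ j, ∑ k, C j k * C j k * B i i = (C * C).trace * B.trace := by
    rw [← b2, S1]
  have c1 : ∑ i, ∑ j, ∑ k, C i i * C j k * B j k = C.trace * (C * B).trace := by
    simp only [Matrix.trace, Matrix.diag_apply, Matrix.mul_apply, Finset.sum_mul]
    simp only [Finset.mul_sum]
    refine Finset.sum_congr rfl fun i _ => Finset.sum_congr rfl fun j _ =>
      Finset.sum_congr rfl fun k _ => ?_
    rw [hB' k j, mul_assoc]
  have c2 : ∑ i, ∑ j, ∑ k, C j j * C i k * B i k = C.trace * (C * B).trace := by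
    rw [← c1, S1]
  have c3 : ∑ i, ∑ j, ∑ k, C k k * C i j * B i j = C.trace * (C * B).trace := by
    rw [← c2, S2]
  have d1 : ∑ i, ∑ j, ∑ k, C i j * C j k * B i k = (C * C * B).trace := by
    simp only [Matrix.trace, Matrix.diag_apply, Matrix.mul_apply, Finset.sum_mul]
    rw [S2]
    refine Finset.sum_congr rfl fun i _ => Finset.sum_congr rfl fun j _ =>
      Finset.sum_congr rfl fun k _ => ?_
    rw [hB' j i]
  have d2 : ∑ i, ∑ j, ∑ k, C i j * C i k * B j k = (C * C * B).trace := by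
    rw [← d1, S1]
    refine Finset.sum_congr rfl fun i _ => Finset.sum_congr rfl fun j _ =>
      Finset.sum_congr rfl fun k _ => ?_
    rw [hC' j i]
  have d3 : ∑ i, ∑ j, ∑ k, C i k * C j k * B i j = (C * C * B).trace := by
    rw [← d1, S2]
    refine Finset.sum_congr rfl fun i _ => Finset.sum_congr rfl fun j _ =>
      Finset.sum_congr rfl fun k _ => ?_
    rw [hC' k j]
  simp only [← Finset.mul_sum, Finset.sum_add_distrib] at a1 b1 ⊢
  rw [a1, a2, a3, b1, b2, b3, c1, c2, c3, d1, d2, d3]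
  norm_num [Nat.factorial]
  ring
end

section
/- Let n ≥ 1 and let A : {1,…,n}⁴ → ℝ be fully symmetric (invariant under all permutations of its four arguments). Define Sym(A⊗I)(μ₁,…,μ₆) = (1/6!) Σ_{σ ∈ S₆} A(μ_{σ(1)},μ_{σ(2)},μ_{σ(3)},μ_{σ(4)}) δ_{μ_{σ(5)}μ_{σ(6)}}, where δ is the Kronecker delta. Then Σ_{i,j,k=1}^{n} Sym(A⊗I)(i,i,j,j,k,k) = ((n+4)/5) Σ_{μ,ν=1}^{n} A(μ,μ,ν,ν). -/
open Matrix

theorem aux_count : (∑ σ : Equiv.Perm (Fin 6),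
    (if (σ 4).val / 2 = (σ 5).val / 2 then 1 else 0 : ℕ)) = 144 := by
  decide +kernel

def auxL : List (Fin 6 × Fin 6 × Fin 6 × Fin 6 × Fin 6 × Fin 6) :=
  [(2,3,4,5,0,1), (1,3,4,5,0,2), (1,2,4,5,0,3), (1,2,3,5,0,4), (1,2,3,4,0,5),
        (0,3,4,5,1,2), (0,2,4,5,1,3), (0,2,3,5,1,4), (0,2,3,4,1,5), (0,1,4,5,2,3),
        (0,1,3,5,2,4), (0,1,3,4,2,5), (0,1,2,5,3,4), (0,1,2,4,3,5), (0,1,2,3,4,5)]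

set_option synthInstance.maxSize 100000 in
set_option synthInstance.maxHeartbeats 400000 in
theorem aux_key : ∀ a b : Fin 6, a < b → ∀ c, b < c → ∀ d, c < d → ∀ e,
      (e ≠ a ∧ e ≠ b ∧ e ≠ c ∧ e ≠ d) → ∀ f, (f ≠ a ∧ f ≠ b ∧ f ≠ c ∧ f ≠ d) → e ≠ f →
      ((a,b,c,d,e,f) ∈ auxL ∨ (a,b,c,d,f,e) ∈ auxL) := by
  decide +kernel

theorem aux_cases (P : Fin 6 → Fin 6 → Fin 6 → Fin 6 → Fin 6 → Fin 6 → Prop)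
    (hs : ∀ a b c d e f, P a b c d e f → P a b c d f e)
    (h1 : P 2 3 4 5 0 1) (h2 : P 1 3 4 5 0 2) (h3 : P 1 2 4 5 0 3) (h4 : P 1 2 3 5 0 4)
    (h5 : P 1 2 3 4 0 5) (h6 : P 0 3 4 5 1 2) (h7 : P 0 2 4 5 1 3) (h8 : P 0 2 3 5 1 4)
    (h9 : P 0 2 3 4 1 5) (h10 : P 0 1 4 5 2 3) (h11 : P 0 1 3 5 2 4) (h12 : P 0 1 3 4 2 5)
    (h13 : P 0 1 2 5 3 4) (h14 : P 0 1 2 4 3 5) (h15 : P 0 1 2 3 4 5)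
    (a b c d e f : Fin 6) (hab : a < b) (hbc : b < c) (hcd : c < d) (hef : e ≠ f)
    (he : e ≠ a ∧ e ≠ b ∧ e ≠ c ∧ e ≠ d) (hf : f ≠ a ∧ f ≠ b ∧ f ≠ c ∧ f ≠ d) :
    P a b c d e f := by
  obtain ⟨he1, he2, he3, he4⟩ := he
  obtain ⟨hf1, hf2, hf3, hf4⟩ := hf
  have hk := aux_key a b hab c hbc d hcd e ⟨he1, he2, he3, he4⟩ f ⟨hf1, hf2, hf3, hf4⟩ hef
  have hL : ∀ x ∈ auxL, P x.1 x.2.1 x.2.2.1 x.2.2.2.1 x.2.2.2.2.1 x.2.2.2.2.2 := by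
    intro x hx
    simp only [auxL, List.mem_cons, List.not_mem_nil, or_false] at hx
    rcases hx with rfl | rfl | rfl | rfl | rfl | rfl | rfl | rfl | rfl | rfl | rfl | rfl | rfl |
      rfl | rfl <;> assumption
  rcases hk with hk | hk
  · exact hL _ hk
  · exact hs _ _ _ _ _ _ (hL _ hk)

theorem aux_term (n : ℕ) (A : Fin n → Fin n → Fin n → Fin n → ℝ)
    (hA : ∀ (π : Equiv.Perm (Fin 4)) (μ : Fin 4 → Fin n),
      A (μ (π 0)) (μ (π 1)) (μ (π 2)) (μ (π 3)) = A (μ 0) (μ 1) (μ 2) (μ 3))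
    (σ : Equiv.Perm (Fin 6)) :
    (∑ i : Fin n, ∑ j : Fin n, ∑ k : Fin n,
          A (![i, i, j, j, k, k] (σ 0)) (![i, i, j, j, k, k] (σ 1))
            (![i, i, j, j, k, k] (σ 2)) (![i, i, j, j, k, k] (σ 3))
            * (if ![i, i, j, j, k, k] (σ 4) = ![i, i, j, j, k, k] (σ 5)
               then (1 : ℝ) else 0))
      = (if (σ 4).val / 2 = (σ 5).val / 2 then (n : ℝ) else 1)
        * ∑ μ : Fin n, ∑ ν : Fin n, A μ μ ν ν := by
  have s2 : ∀ x y, A x y y x = A x x y y := fun x y => by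
    simpa [Equiv.swap_apply_def] using (hA (Equiv.swap 1 3) ![x, x, y, y])
  have q1 : (∑ i, ∑ j, ∑ k, A i j k k * if i = j then (1:ℝ) else 0) = ∑ x, ∑ ν, A x x ν ν := by
    simp [← Finset.sum_mul, mul_ite]
  have q2 : (∑ i, ∑ j, ∑ k, A i j j k * if i = k then (1:ℝ) else 0) = ∑ x, ∑ ν, A x x ν ν := by
    simp [mul_ite, s2]
  have q3 : (∑ i, ∑ j, ∑ k, A i i j k * if j = k then (1:ℝ) else 0) = ∑ x, ∑ ν, A x x ν ν := by
    simp [mul_ite]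
  let τ : Fin 4 → Fin 6 := fun i => σ (Fin.castLE (by norm_num) i)
  have hτ : Function.Injective τ := fun x y h => by
    simpa using σ.injective h
  let π := Tuple.sort τ
  have hm : StrictMono (τ ∘ π) :=
    (Tuple.monotone_sort τ).strictMono_of_injective (hτ.comp π.injective)
  have e : ∀ i j k : Fin n, A (![i, i, j, j, k, k] (σ 0)) (![i, i, j, j, k, k] (σ 1))
            (![i, i, j, j, k, k] (σ 2)) (![i, i, j, j, k, k] (σ 3)) =
      A (![i, i, j, j, k, k] (τ (π 0))) (![i, i, j, j, k, k] (τ (π 1)))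
            (![i, i, j, j, k, k] (τ (π 2))) (![i, i, j, j, k, k] (τ (π 3))) := fun i j k =>
    (hA π (fun t => ![i, i, j, j, k, k] (τ t))).symm
  simp only [e]
  have n4 : ∀ t, σ 4 ≠ τ t := fun t h => by
    have := σ.injective h
    clear h; revert this; revert t; decide
  have n5 : ∀ t, σ 5 ≠ τ t := fun t h => by
    have := σ.injective h
    clear h; revert this; revert t; decide
  refine aux_cases (fun a b c d e f => (∑ i : Fin n, ∑ j : Fin n, ∑ k : Fin n,
          A (![i, i, j, j, k, k] a) (![i, i, j, j, k, k] b)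
            (![i, i, j, j, k, k] c) (![i, i, j, j, k, k] d)
            * (if ![i, i, j, j, k, k] e = ![i, i, j, j, k, k] f
               then (1 : ℝ) else 0))
      = (if e.val / 2 = f.val / 2 then (n : ℝ) else 1)
        * ∑ μ : Fin n, ∑ ν : Fin n, A μ μ ν ν) ?_ ?_ ?_ ?_ ?_ ?_ ?_ ?_ ?_ ?_ ?_ ?_ ?_ ?_ ?_ ?_
      _ _ _ _ _ _ (hm (by decide : (0 : Fin 4) < 1)) (hm (by decide : (1 : Fin 4) < 2))
      (hm (by decide : (2 : Fin 4) < 3)) (fun h => absurd (σ.injective h) (by decide))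
      ⟨n4 _, n4 _, n4 _, n4 _⟩ ⟨n5 _, n5 _, n5 _, n5 _⟩
  · intro a b c d e f h
    simp only [eq_comm (a := f.val / 2)]
    rw [← h]
    refine Finset.sum_congr rfl fun i _ => Finset.sum_congr rfl fun j _ =>
      Finset.sum_congr rfl fun k _ => ?_
    simp only [eq_comm]
  all_goals simp [← Finset.mul_sum]
  all_goals first | exact q1 | exact q2 | exact q3

/-- **Contraction of the symmetrized product of a fully symmetric 4-tensor with the
identity.** With
`Sym(A⊗I)(μ₁,…,μ₆) = (1/6!) Σ_{σ ∈ S₆} A(μ_{σ(1)},…,μ_{σ(4)}) δ_{μ_{σ(5)}μ_{σ(6)}}`,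
one has `Σ_{i,j,k} Sym(A⊗I)(i,i,j,j,k,k) = ((n+4)/5) Σ_{μ,ν} A(μ,μ,ν,ν)`. -/
theorem contraction_sym_A_delta
    (n : ℕ) (hn : 1 ≤ n)
    (A : Fin n → Fin n → Fin n → Fin n → ℝ)
    (hA : ∀ (π : Equiv.Perm (Fin 4)) (μ : Fin 4 → Fin n),
      A (μ (π 0)) (μ (π 1)) (μ (π 2)) (μ (π 3)) = A (μ 0) (μ 1) (μ 2) (μ 3)) :
    (∑ i : Fin n, ∑ j : Fin n, ∑ k : Fin n,
        (1 / (Nat.factorial 6 : ℝ)) * ∑ σ : Equiv.Perm (Fin 6),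
          A (![i, i, j, j, k, k] (σ 0)) (![i, i, j, j, k, k] (σ 1))
            (![i, i, j, j, k, k] (σ 2)) (![i, i, j, j, k, k] (σ 3))
            * (if ![i, i, j, j, k, k] (σ 4) = ![i, i, j, j, k, k] (σ 5)
               then (1 : ℝ) else 0))
      = (((n : ℝ) + 4) / 5) * ∑ μ : Fin n, ∑ ν : Fin n, A μ μ ν ν := by
  have h : ∀ σ : Equiv.Perm (Fin 6), (if (σ 4).val / 2 = (σ 5).val / 2 then (n : ℝ) else 1)
      = 1 + ((n : ℝ) - 1) * ((if (σ 4).val / 2 = (σ 5).val / 2 then 1 else 0 : ℕ) : ℝ) := by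
    intro σ
    split_ifs <;> simp
  simp only [← Finset.mul_sum]
  have sw : ∀ g : Fin n → Fin n → Fin n → Equiv.Perm (Fin 6) → ℝ,
      ∑ i, ∑ j, ∑ k, ∑ σ, g i j k σ = ∑ σ, ∑ i, ∑ j, ∑ k, g i j k σ := by
    intro g
    rw [Finset.sum_comm]
    simp only [Finset.sum_comm (s := (Finset.univ : Finset (Fin n)))
      (t := (Finset.univ : Finset (Equiv.Perm (Fin 6))))]
    refine Finset.sum_congr rfl fun σ _ => Finset.sum_comm
  rw [sw]
  simp only [aux_term n A hA]
  rw [← Finset.sum_mul]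
  simp only [h]
  rw [Finset.sum_add_distrib, ← Finset.mul_sum, ← Nat.cast_sum, aux_count]
  simp [Fintype.card_perm, Nat.factorial]
  ring
end

section
/- Let n ≥ 1 and let C be a symmetric n×n real matrix. Define Sym(C⊗C⊗I)(μ₁,…,μ₆) = (1/6!) Σ_{σ ∈ S₆} C_{μ_{σ(1)}μ_{σ(2)}} C_{μ_{σ(3)}μ_{σ(4)}} δ_{μ_{σ(5)}μ_{σ(6)}}, where δ is the Kronecker delta. Then Σ_{i,j,k=1}^{n} Sym(C⊗C⊗I)(i,i,j,j,k,k) = ((n+4)/15) ( (tr C)² + 2 tr(C²) ). -/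
open Matrix

def ccPair : Fin 6 → Fin 3 := ![0, 0, 1, 1, 2, 2]

def ccKind (a b c d e f : Fin 3) : Fin 4 :=
  if e = f then (if a = b then 0 else 1) else (if a = b ∨ c = d then 2 else 3)

def ccKindP (σ : Equiv.Perm (Fin 6)) : Fin 4 :=
  ccKind (ccPair (σ 0)) (ccPair (σ 1)) (ccPair (σ 2)) (ccPair (σ 3)) (ccPair (σ 4)) (ccPair (σ 5))

def ccEq2 (a b x y : Fin 3) : Prop := (a = x ∧ b = y) ∨ (a = y ∧ b = x)

instance (a b x y : Fin 3) : Decidable (ccEq2 a b x y) := by unfold ccEq2; infer_instance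

def ccGood (a b c d e f : Fin 3) : Prop :=
  ∃ x y z : Fin 3, x ≠ y ∧ x ≠ z ∧ y ≠ z ∧
    ((a = x ∧ b = x ∧ c = y ∧ d = y ∧ e = z ∧ f = z) ∨
     (ccEq2 a b x y ∧ ccEq2 c d x y ∧ e = z ∧ f = z) ∨
     (a = x ∧ b = x ∧ ccEq2 c d y z ∧ ccEq2 e f y z) ∨
     (ccEq2 a b y z ∧ c = x ∧ d = x ∧ ccEq2 e f y z) ∨
     (ccEq2 a b x y ∧ ccEq2 c d y z ∧ ccEq2 e f x z))

instance (a b c d e f : Fin 3) : Decidable (ccGood a b c d e f) := by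
  unfold ccGood; infer_instance

theorem ccGood_perm : ∀ σ : Equiv.Perm (Fin 6),
    ccGood (ccPair (σ 0)) (ccPair (σ 1)) (ccPair (σ 2)) (ccPair (σ 3))
      (ccPair (σ 4)) (ccPair (σ 5)) := by
  decide +kernel

theorem ccCount : ∀ m : Fin 4,
    (Finset.univ.filter (fun σ : Equiv.Perm (Fin 6) => ccKindP σ = m)).card
      = (![48, 96, 192, 384] : Fin 4 → ℕ) m := by
  decide +kernel

theorem cc_vec {n : ℕ} (i j k : Fin n) (t : Fin 6) :
    (![i, i, j, j, k, k] : Fin 6 → Fin n) t = (![i, j, k] : Fin 3 → Fin n) (ccPair t) := by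
  fin_cases t <;> rfl

theorem cc_relabel {n : ℕ} (G : Fin n → Fin n → Fin n → ℝ) (x y z : Fin 3)
    (h1 : x ≠ y) (h2 : x ≠ z) (h3 : y ≠ z) :
    ∑ i : Fin n, ∑ j : Fin n, ∑ k : Fin n,
      G ((![i, j, k] : Fin 3 → Fin n) x) ((![i, j, k] : Fin 3 → Fin n) y)
        ((![i, j, k] : Fin 3 → Fin n) z) = ∑ i, ∑ j, ∑ k, G i j k := by
  have e : ∀ H : Fin n → Fin n → Fin n → ℝ,
      ∑ i, ∑ j, ∑ k, H i j k = ∑ i, ∑ j, ∑ k, H j i k := fun H => Finset.sum_comm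
  have e' : ∀ H : Fin n → Fin n → Fin n → ℝ,
      ∑ i, ∑ j, ∑ k, H i j k = ∑ i, ∑ j, ∑ k, H i k j :=
    fun H => Finset.sum_congr rfl fun i _ => Finset.sum_comm
  have q : (x = 0 ∧ y = 1 ∧ z = 2) ∨ (x = 0 ∧ y = 2 ∧ z = 1) ∨ (x = 1 ∧ y = 0 ∧ z = 2) ∨
      (x = 1 ∧ y = 2 ∧ z = 0) ∨ (x = 2 ∧ y = 0 ∧ z = 1) ∨ (x = 2 ∧ y = 1 ∧ z = 0) := by
    revert x y z; decide
  rcases q with ⟨rfl, rfl, rfl⟩ | ⟨rfl, rfl, rfl⟩ | ⟨rfl, rfl, rfl⟩ | ⟨rfl, rfl, rfl⟩ |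
    ⟨rfl, rfl, rfl⟩ | ⟨rfl, rfl, rfl⟩
  · rfl
  · exact e' (fun i j k => G i k j)
  · exact e (fun i j k => G j i k)
  · exact (e' (fun i j k => G j k i)).trans (e (fun i j k => G k j i) |>.trans
      (e' (fun i j k => G k i j) |>.trans (e (fun i j k => G j i k) |>.trans
      (e' (fun i j k => G i j k) |>.trans (e' (fun i j k => G i k j))))))
  · exact (e (fun i j k => G k i j)).trans (e' (fun i j k => G k j i) |>.trans (e (fun i j k => G j k i) |>.trans
      (e' (fun i j k => G i k j))))
  · exact (e (fun i j k => G k j i)).trans (e' (fun i j k => G k i j) |>.trans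
      (e (fun i j k => G j i k)))

def ccVal {n : ℕ} (C : Matrix (Fin n) (Fin n) ℝ) : Fin 4 → ℝ :=
  ![n * C.trace ^ 2, n * (C * C).trace, C.trace ^ 2, (C * C).trace]

theorem cc_term {n : ℕ} (C : Matrix (Fin n) (Fin n) ℝ) (hC : C.IsSymm)
    (a b c d e f : Fin 3) (h : ccGood a b c d e f) :
    ∑ i : Fin n, ∑ j : Fin n, ∑ k : Fin n,
      C ((![i, j, k] : Fin 3 → Fin n) a) ((![i, j, k] : Fin 3 → Fin n) b)
      * C ((![i, j, k] : Fin 3 → Fin n) c) ((![i, j, k] : Fin 3 → Fin n) d)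
      * (if (![i, j, k] : Fin 3 → Fin n) e = (![i, j, k] : Fin 3 → Fin n) f then (1:ℝ) else 0)
      = ccVal C (ccKind a b c d e f) := by
  have hs : ∀ p q, C p q = C q p := fun p q => hC.apply q p
  have ht : C.trace = ∑ i, C i i := rfl
  have ht2 : C.trace ^ 2 = ∑ i, ∑ j, C i i * C j j := by
    rw [sq, ht, Finset.sum_mul_sum]
  have hs2 : (C * C).trace = ∑ i, ∑ j, C i j * C i j := by
    simp only [Matrix.trace, Matrix.diag, Matrix.mul_apply]
    exact Finset.sum_congr rfl fun i _ => Finset.sum_congr rfl fun j _ => by rw [hs j i]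
  -- canonical sums
  have s0 : ∑ i : Fin n, ∑ j : Fin n, ∑ k : Fin n, C i i * C j j * (if k = k then (1:ℝ) else 0)
      = n * C.trace ^ 2 := by
    rw [ht2]; simp [Finset.mul_sum]
  have s1 : ∑ i : Fin n, ∑ j : Fin n, ∑ k : Fin n, C i j * C i j * (if k = k then (1:ℝ) else 0)
      = n * (C * C).trace := by
    rw [hs2]; simp [Finset.mul_sum]
  have s2 : ∑ i : Fin n, ∑ j : Fin n, ∑ k : Fin n, C i i * C j k * (if j = k then (1:ℝ) else 0)
      = C.trace ^ 2 := by
    rw [ht2]; simp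
  have s3 : ∑ i : Fin n, ∑ j : Fin n, ∑ k : Fin n, C i j * C j k * (if i = k then (1:ℝ) else 0)
      = (C * C).trace := by
    rw [hs2]; simp
    exact Finset.sum_congr rfl fun i _ => Finset.sum_congr rfl fun j _ => by rw [hs j i]
  obtain ⟨x, y, z, h1, h2, h3, h⟩ := h
  have r0 := (cc_relabel (fun i j k => C i i * C j j * (if k = k then (1:ℝ) else 0)) x y z h1 h2 h3).trans s0
  have r1 := (cc_relabel (fun i j k => C i j * C i j * (if k = k then (1:ℝ) else 0)) x y z h1 h2 h3).trans s1
  have r2 := (cc_relabel (fun i j k => C i i * C j k * (if j = k then (1:ℝ) else 0)) x y z h1 h2 h3).trans s2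
  have r3 := (cc_relabel (fun i j k => C i j * C j k * (if i = k then (1:ℝ) else 0)) x y z h1 h2 h3).trans s3
  clear s0 s1 s2 s3 ht ht2 hs2
  rcases h with ⟨rfl, rfl, rfl, rfl, rfl, rfl⟩ | ⟨h4, h5, rfl, rfl⟩ | ⟨rfl, rfl, h5, h6⟩ |
    ⟨h4, rfl, rfl, h6⟩ | ⟨h4, h5, h6⟩
  · have k : ccKind b b d d f f = 0 := by simp [ccKind]
    rw [k]; exact r0
  · have k : ccKind a b c d f f = 1 := by
      clear r0 r1 r2 r3; revert a b c d x y f; decide +kernel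
    rw [k]; refine Eq.trans ?_ r1
    refine Finset.sum_congr rfl fun i _ => Finset.sum_congr rfl fun j _ =>
      Finset.sum_congr rfl fun k _ => ?_
    rcases h4 with ⟨rfl, rfl⟩ | ⟨rfl, rfl⟩ <;> rcases h5 with ⟨rfl, rfl⟩ | ⟨rfl, rfl⟩ <;>
      grind
  · have k : ccKind b b c d e f = 2 := by
      clear r0 r1 r2 r3; revert b c d e f y z; decide +kernel
    rw [k]; refine Eq.trans ?_ r2
    refine Finset.sum_congr rfl fun i _ => Finset.sum_congr rfl fun j _ =>
      Finset.sum_congr rfl fun k _ => ?_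
    rcases h5 with ⟨rfl, rfl⟩ | ⟨rfl, rfl⟩ <;> rcases h6 with ⟨rfl, rfl⟩ | ⟨rfl, rfl⟩ <;>
      grind
  · have k : ccKind a b d d e f = 2 := by
      clear r0 r1 r2 r3; unfold ccEq2 at h4 h6; unfold ccKind; grind
    rw [k]; refine Eq.trans ?_ r2
    refine Finset.sum_congr rfl fun i _ => Finset.sum_congr rfl fun j _ =>
      Finset.sum_congr rfl fun k _ => ?_
    rcases h4 with ⟨rfl, rfl⟩ | ⟨rfl, rfl⟩ <;> rcases h6 with ⟨rfl, rfl⟩ | ⟨rfl, rfl⟩ <;>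
      grind
  · have k : ccKind a b c d e f = 3 := by
      clear r0 r1 r2 r3; revert a b c d e f x y z; decide +kernel
    rw [k]; refine Eq.trans ?_ r3
    refine Finset.sum_congr rfl fun i _ => Finset.sum_congr rfl fun j _ =>
      Finset.sum_congr rfl fun k _ => ?_
    rcases h4 with ⟨rfl, rfl⟩ | ⟨rfl, rfl⟩ <;> rcases h5 with ⟨rfl, rfl⟩ | ⟨rfl, rfl⟩ <;> rcases h6 with ⟨rfl, rfl⟩ | ⟨rfl, rfl⟩ <;>
      grind

theorem contraction_sym_CC_delta
    (n : ℕ) (hn : 1 ≤ n)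
    (C : Matrix (Fin n) (Fin n) ℝ) (hC : C.IsSymm) :
    (∑ i : Fin n, ∑ j : Fin n, ∑ k : Fin n,
        (1 / (Nat.factorial 6 : ℝ)) * ∑ σ : Equiv.Perm (Fin 6),
          C (![i, i, j, j, k, k] (σ 0)) (![i, i, j, j, k, k] (σ 1))
            * C (![i, i, j, j, k, k] (σ 2)) (![i, i, j, j, k, k] (σ 3))
            * (if ![i, i, j, j, k, k] (σ 4) = ![i, i, j, j, k, k] (σ 5)
               then (1 : ℝ) else 0))
      = (((n : ℝ) + 4) / 15) * (C.trace ^ 2 + 2 * (C * C).trace) := by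
  simp only [cc_vec, ← Finset.mul_sum]
  have sw : ∀ F : Fin n → Fin n → Fin n → Equiv.Perm (Fin 6) → ℝ,
      ∑ i, ∑ j, ∑ k, ∑ σ, F i j k σ = ∑ σ, ∑ i, ∑ j, ∑ k, F i j k σ := by
    intro F
    have a1 : ∀ i j, ∑ k, ∑ σ, F i j k σ = ∑ σ, ∑ k, F i j k σ := fun i j => Finset.sum_comm
    have a2 : ∀ i, ∑ j, ∑ σ, ∑ k, F i j k σ = ∑ σ, ∑ j, ∑ k, F i j k σ :=
      fun i => Finset.sum_comm
    simp only [a1, a2]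
    exact Finset.sum_comm
  rw [sw, Finset.sum_congr rfl fun σ _ => cc_term C hC _ _ _ _ _ _ (ccGood_perm σ)]
  have hk : ∑ σ : Equiv.Perm (Fin 6), ccVal C (ccKindP σ)
      = ∑ m : Fin 4, ((![48, 96, 192, 384] : Fin 4 → ℕ) m : ℝ) * ccVal C m := by
    rw [← Finset.sum_fiberwise (s := Finset.univ) (g := ccKindP)]
    refine Finset.sum_congr rfl fun m _ => ?_
    rw [← ccCount m, Finset.sum_congr rfl (g := fun _ => ccVal C m), Finset.sum_const, nsmul_eq_mul]
    intro σ hσ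
    rw [(Finset.mem_filter.mp hσ).2]
  have hk' := hk
  simp only [ccKindP] at hk'
  rw [hk']
  simp [Fin.sum_univ_four, ccVal, Nat.factorial]
  ring
end
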